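/- For each admissible pair (p,t) with |t| < 1/2 − 1/p, let Λ₃₁₂ = {g ∈ Γ̃(p,t) : g maps the subspace {x ∈ ℂ³ : ⟨x, v₃₁₂⟩ = 0} onto itself} and Λ₃₂₁ = {g ∈ Γ̃(p,t) : g maps the subspace {x ∈ ℂ³ : ⟨x, v₃₂₁⟩ = 0} onto itself}. Then the subgroup of GL(3,ℂ) generated by Λ₃₁₂ ∪ Λ₃₂₁ equals Γ̃(p,t). -/

import Mathlib

/-! The group `Γ` is generated by the complex reflections `R₁, R₂ = J R₁ J⁻¹` and by `J`.
The form `⟨·, v₃₁₂⟩` does not involve the first coordinate, and `⟨·, v₃₂₁⟩` does not involve the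
second one. As `R₁` and `R₂` change only these coordinates, `R₁` stabilizes the polar of `v₃₁₂` and
`R₂` stabilizes the polar of `v₃₂₁`. Moreover `v₃₁₂` is an eigenvector of `J R₂`, so `J R₂` also
stabilizes the polar of `v₃₁₂`. Hence the hybrid contains `R₁`, `R₂` and `J R₂`, so `J` as well.
The only arithmetic input is `α (η - η̄) = i`, which holds for every `p ≥ 2`. -/

noncomputable section

open Matrix

/-- η = exp(iπ/p) -/
def eta (p : ℕ) : ℂ := Complex.exp (Real.pi * Complex.I / p)
/-- η̄ = exp(−iπ/p) -/
def etab (p : ℕ) : ℂ := Complex.exp (-(Real.pi * Complex.I / p))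
/-- φ = exp(iπt/3) -/
def phi (t : ℝ) : ℂ := Complex.exp (Real.pi * Complex.I * t / 3)
/-- φ̄ = exp(−iπt/3) -/
def phib (t : ℝ) : ℂ := Complex.exp (-(Real.pi * Complex.I * t / 3))
/-- α = 1/(2 sin(π/p)) -/
def alpha (p : ℕ) : ℂ := 1 / (2 * Real.sin (Real.pi / p))

def R1 (p : ℕ) (t : ℝ) : Matrix (Fin 3) (Fin 3) ℂ :=
  !![eta p ^ 2, -Complex.I * eta p * phib t, -Complex.I * eta p * phi t;
     0, 1, 0;
     0, 0, 1]

def R2 (p : ℕ) (t : ℝ) : Matrix (Fin 3) (Fin 3) ℂ :=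
  !![1, 0, 0;
     -Complex.I * eta p * phi t, eta p ^ 2, -Complex.I * eta p * phib t;
     0, 0, 1]

def R3 (p : ℕ) (t : ℝ) : Matrix (Fin 3) (Fin 3) ℂ :=
  !![1, 0, 0;
     0, 1, 0;
     -Complex.I * eta p * phib t, -Complex.I * eta p * phi t, eta p ^ 2]

def Jmat : Matrix (Fin 3) (Fin 3) ℂ :=
  !![0, 0, 1;
     1, 0, 0;
     0, 1, 0]

def Hmat (p : ℕ) (t : ℝ) : Matrix (Fin 3) (Fin 3) ℂ :=
  !![1, -alpha p * phi t, -alpha p * phib t;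
     -alpha p * phib t, 1, -alpha p * phi t;
     -alpha p * phi t, -alpha p * phib t, 1]

/-- The Hermitian form ⟨x,y⟩ = xᵀ·H·ȳ. -/
def form (p : ℕ) (t : ℝ) (x y : Fin 3 → ℂ) : ℂ :=
  dotProduct x ((Hmat p t).mulVec (fun i => starRingEnd ℂ (y i)))

def v123 (p : ℕ) (t : ℝ) : Fin 3 → ℂ :=
  ![-Complex.I * eta p * phib t, 1, Complex.I * etab p * phi t]
def v231 (p : ℕ) (t : ℝ) : Fin 3 → ℂ :=
  ![Complex.I * etab p * phi t, -Complex.I * eta p * phib t, 1]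
def v312 (p : ℕ) (t : ℝ) : Fin 3 → ℂ :=
  ![1, Complex.I * etab p * phi t, -Complex.I * eta p * phib t]
def v321 (p : ℕ) (t : ℝ) : Fin 3 → ℂ :=
  ![Complex.I * etab p * phib t, 1, -Complex.I * eta p * phi t]
def v132 (p : ℕ) (t : ℝ) : Fin 3 → ℂ :=
  ![-Complex.I * eta p * phi t, Complex.I * etab p * phib t, 1]
def v213 (p : ℕ) (t : ℝ) : Fin 3 → ℂ :=
  ![1, -Complex.I * eta p * phi t, Complex.I * etab p * phib t]

/-- The admissible pairs `(p,t)`: the values for which Mostow's group Γ(p,t) is discrete. -/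
def admissible (p : ℕ) (t : ℝ) : Prop :=
  (p = 3 ∧ (t = 0 ∨ t = 1/30 ∨ t = 1/18 ∨ t = 1/12 ∨ t = 5/42 ∨ t = 1/6 ∨ t = 7/30 ∨ t = 1/3)) ∨
  (p = 4 ∧ (t = 0 ∨ t = 1/12 ∨ t = 3/20 ∨ t = 1/4 ∨ t = 5/12)) ∨
  (p = 5 ∧ (t = 1/10 ∨ t = 1/5 ∨ t = 11/30 ∨ t = 7/10))

theorem eta_mul_etab (p : ℕ) : eta p * etab p = 1 := by
  rw [eta, etab, ← Complex.exp_add, add_neg_cancel, Complex.exp_zero]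

theorem phi_mul_phib (t : ℝ) : phi t * phib t = 1 := by
  rw [phi, phib, ← Complex.exp_add, add_neg_cancel, Complex.exp_zero]

theorem conj_eta (p : ℕ) : starRingEnd ℂ (eta p) = etab p := by
  rw [eta, etab, ← Complex.exp_conj]
  congr 1
  simp [neg_div]

theorem conj_etab (p : ℕ) : starRingEnd ℂ (etab p) = eta p := by
  rw [← conj_eta, Complex.conj_conj]

theorem conj_phi (t : ℝ) : starRingEnd ℂ (phi t) = phib t := by
  rw [phi, phib, ← Complex.exp_conj]
  congr 1
  simp [neg_div, Complex.conj_ofNat]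

theorem conj_phib (t : ℝ) : starRingEnd ℂ (phib t) = phi t := by
  rw [← conj_phi, Complex.conj_conj]

theorem alpha_mul {p : ℕ} (hp : 2 ≤ p) : alpha p * (eta p - etab p) = Complex.I := by
  have hp' : (2 : ℝ) ≤ p := by exact_mod_cast hp
  have hs : Real.sin (Real.pi / p) ≠ 0 := by
    apply ne_of_gt
    apply Real.sin_pos_of_pos_of_lt_pi
    · have := Real.pi_pos
      positivity
    · exact div_lt_self Real.pi_pos (by linarith)
  have hs' : ((Real.sin (Real.pi / p) : ℝ) : ℂ) ≠ 0 := by exact_mod_cast hs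
  have h : eta p - etab p = 2 * Complex.I * (Real.sin (Real.pi / p) : ℝ) := by
    have e1 : eta p = Complex.exp (((Real.pi / p : ℝ) : ℂ) * Complex.I) := by
      rw [eta]; congr 1; push_cast; ring
    have e2 : etab p = Complex.exp (-((Real.pi / p : ℝ) : ℂ) * Complex.I) := by
      rw [etab]; congr 1; push_cast; ring
    rw [e1, e2, Complex.ofReal_sin, Complex.sin]
    linear_combination
      (-(Complex.exp (-((Real.pi / p : ℝ) : ℂ) * Complex.I)
        - Complex.exp (((Real.pi / p : ℝ) : ℂ) * Complex.I))) * Complex.I_mul_I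
  rw [h, alpha]
  field_simp

/-- Up to a scalar, `⟨·, v₃₁₂⟩` is the linear form `x ↦ iηφ x₂ + x₃`. -/
theorem form_v312 {p : ℕ} (hp : 2 ≤ p) (t : ℝ) : ∃ k : ℂ, ∀ x : Fin 3 → ℂ,
    form p t x (v312 p t) = k * (Complex.I * eta p * phi t * x 1 + x 2) := by
  have h1 := eta_mul_etab p
  have h2 := phi_mul_phib t
  have h3 := alpha_mul hp
  have h4 := Complex.I_mul_I
  refine ⟨alpha p * (-etab p ^ 2 * phi t + Complex.I * eta p * phib t ^ 2), fun x => ?_⟩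
  simp only [form, Hmat, v312, dotProduct, mulVec, Fin.sum_univ_three, Matrix.of_apply,
    Matrix.cons_val_zero, Matrix.cons_val_one, Matrix.cons_val, map_mul, map_neg, map_one,
    Complex.conj_I, conj_eta, conj_etab, conj_phi, conj_phib]
  generalize eta p = e at *
  generalize etab p = e' at *
  generalize phi t = f at *
  generalize phib t = f' at *
  generalize alpha p = a at *
  generalize Complex.I = I at *
  -- The three coefficients of the form, reduced by means of `α (η - η̄) = i`.
  have c0 : 1 + a * f * (I * e * f') - a * f' * (I * e' * f) = 0 := by
    linear_combination (I * a * (e - e')) * h2 + I * h3 + h4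
  have c1 : -a * f' - I * e * f' - a * f * (I * e' * f)
      = a * (-e' ^ 2 * f + I * e * f' ^ 2) * (I * e * f) := by
    linear_combination (I * f ^ 2 * a * e' + a * f') * h1 - a * I ^ 2 * e ^ 2 * f' * h2
      + e * f' * h3 - a * e ^ 2 * f' * h4
  have c2 : -a * f + a * f' * (I * e * f') + I * e' * f
      = a * (-e' ^ 2 * f + I * e * f' ^ 2) := by
    linear_combination a * f * h1 - e' * f * h3
  linear_combination x 0 * c0 + x 1 * c1 + x 2 * c2

/-- The linear form `⟨·, v₃₂₁⟩` does not involve the second coordinate. -/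
theorem form_v321 {p : ℕ} (hp : 2 ≤ p) (t : ℝ) : ∃ a b : ℂ, ∀ x : Fin 3 → ℂ,
    form p t x (v321 p t) = a * x 0 + b * x 2 := by
  have h2 := phi_mul_phib t
  have h3 := alpha_mul hp
  have h4 := Complex.I_mul_I
  refine ⟨-Complex.I * eta p * phi t - alpha p * phi t
      - alpha p * phib t * (Complex.I * etab p * phib t),
    alpha p * phi t * (Complex.I * eta p * phi t) - alpha p * phib t
      + Complex.I * etab p * phib t, fun x => ?_⟩
  simp only [form, Hmat, v321, dotProduct, mulVec, Fin.sum_univ_three, Matrix.of_apply,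
    Matrix.cons_val_zero, Matrix.cons_val_one, Matrix.cons_val, map_mul, map_neg, map_one,
    Complex.conj_I, conj_eta, conj_etab, conj_phi, conj_phib]
  linear_combination x 1 * ((Complex.I * alpha p * (eta p - etab p)) * h2 + Complex.I * h3 + h4)

/-- An invertible matrix under which a function is multiplied by a nonzero scalar maps the zero set
of that function onto itself. -/
theorem image_zero_set (g : GL (Fin 3) ℂ) (l : (Fin 3 → ℂ) → ℂ) (c : ℂ) (hc : c ≠ 0)
    (h : ∀ x, l ((g : Matrix (Fin 3) (Fin 3) ℂ).mulVec x) = c * l x) :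
    (fun x => (g : Matrix (Fin 3) (Fin 3) ℂ).mulVec x) '' {x | l x = 0} = {x | l x = 0} := by
  ext y
  constructor
  · rintro ⟨x, hx, rfl⟩
    have hx' : l x = 0 := hx
    change l _ = 0
    rw [h, hx', mul_zero]
  · intro hy
    have hgy : (g : Matrix (Fin 3) (Fin 3) ℂ).mulVec
        (((g⁻¹ : GL (Fin 3) ℂ) : Matrix (Fin 3) (Fin 3) ℂ).mulVec y) = y := by
      rw [Matrix.mulVec_mulVec, ← Units.val_mul, mul_inv_cancel, Units.val_one, Matrix.one_mulVec]
    refine ⟨_, ?_, hgy⟩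
    have := h (((g⁻¹ : GL (Fin 3) ℂ) : Matrix (Fin 3) (Fin 3) ℂ).mulVec y)
    rw [hgy, hy] at this
    exact (mul_eq_zero.mp this.symm).resolve_left hc

/-- The relation `J R₁ = R₂ J`. -/
theorem Jmat_mul_R1 (p : ℕ) (t : ℝ) : Jmat * R1 p t = R2 p t * Jmat := by
  ext i j
  fin_cases i <;> fin_cases j <;> simp [Jmat, R1, R2, Matrix.mul_apply, Fin.sum_univ_three]

/-- For each admissible pair (p,t) with small phase shift |t| < 1/2 − 1/p, the hybrid
H(Γ₃₁₂, Γ₃₂₁) — the subgroup generated by the stabilizers in Γ̃(p,t) of the subspaces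
polar to v₃₁₂ and to v₃₂₁ — equals the full lattice Γ̃(p,t). -/
theorem small_phase_hybrid_full (p : ℕ) (t : ℝ) (hadm : admissible p t)
    (hsmall : |t| < 1/2 - 1/(p : ℝ))
    (R1' J' : GL (Fin 3) ℂ)
    (hR1 : (R1' : Matrix (Fin 3) (Fin 3) ℂ) = R1 p t)
    (hJ : (J' : Matrix (Fin 3) (Fin 3) ℂ) = Jmat) :
    let Γ : Subgroup (GL (Fin 3) ℂ) := Subgroup.closure {R1', J'}
    let S312 : Set (Fin 3 → ℂ) := {x | form p t x (v312 p t) = 0}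
    let S321 : Set (Fin 3 → ℂ) := {x | form p t x (v321 p t) = 0}
    let Λ312 : Set (GL (Fin 3) ℂ) :=
      {g | g ∈ Γ ∧ (fun x => (g : Matrix (Fin 3) (Fin 3) ℂ).mulVec x) '' S312 = S312}
    let Λ321 : Set (GL (Fin 3) ℂ) :=
      {g | g ∈ Γ ∧ (fun x => (g : Matrix (Fin 3) (Fin 3) ℂ).mulVec x) '' S321 = S321}
    Subgroup.closure (Λ312 ∪ Λ321) = Γ := by
  intro Γ S312 S321 Λ312 Λ321
  have hp : 2 ≤ p := by
    rcases hadm with h | h | h <;> omega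
  have mR1 : R1' ∈ Γ := Subgroup.subset_closure (by simp)
  have mJ : J' ∈ Γ := Subgroup.subset_closure (by simp)
  obtain ⟨k, hk⟩ := form_v312 hp t
  obtain ⟨a, b, hab⟩ := form_v321 hp t
  have he := eta_mul_etab p
  have hf := phi_mul_phib t
  have hR2 : ((J' * R1' * J'⁻¹ : GL (Fin 3) ℂ) : Matrix (Fin 3) (Fin 3) ℂ) = R2 p t := by
    rw [Units.val_mul, Units.val_mul, hJ, hR1, Jmat_mul_R1, ← hJ, mul_assoc, ← Units.val_mul,
      mul_inv_cancel, Units.val_one, mul_one]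
  have hA : R1' ∈ Λ312 := by
    refine ⟨mR1, image_zero_set _ (fun x => form p t x (v312 p t)) 1 one_ne_zero fun x => ?_⟩
    simp [hk, hR1, R1, dotProduct, Fin.sum_univ_three]
  have hB : J' * R1' * J'⁻¹ ∈ Λ321 := by
    refine ⟨mul_mem (mul_mem mJ mR1) (inv_mem mJ),
      image_zero_set _ (fun x => form p t x (v321 p t)) 1 one_ne_zero fun x => ?_⟩
    simp only [hab, hR2]
    simp [R2, mulVec, dotProduct, Fin.sum_univ_three]
  have hC : J' * (J' * R1' * J'⁻¹) ∈ Λ312 := by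
    -- The multiplier is the eigenvalue `-iηφ̄` of `J R₂` at `v₃₁₂`.
    refine ⟨mul_mem mJ (mul_mem (mul_mem mJ mR1) (inv_mem mJ)),
      image_zero_set _ (fun x => form p t x (v312 p t)) (-Complex.I * eta p * phib t) ?_
        fun x => ?_⟩
    · exact mul_ne_zero (mul_ne_zero (neg_ne_zero.mpr Complex.I_ne_zero)
        (left_ne_zero_of_mul_eq_one he)) (right_ne_zero_of_mul_eq_one hf)
    · rw [Units.val_mul, hR2, hJ, ← Matrix.mulVec_mulVec]
      simp only [hk]
      simp only [Jmat, R2, mulVec, dotProduct, Fin.sum_univ_three, Matrix.of_apply,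
        Matrix.cons_val_zero, Matrix.cons_val_one, Matrix.cons_val]
      linear_combination k * x 1 * eta p ^ 2 * (phi t * phib t * Complex.I_mul_I - hf)
  have hA' := Subgroup.subset_closure (Set.mem_union_left Λ321 hA)
  have hB' := Subgroup.subset_closure (Set.mem_union_right Λ312 hB)
  have hC' := Subgroup.subset_closure (Set.mem_union_left Λ321 hC)
  apply le_antisymm
  · rw [Subgroup.closure_le]
    rintro g (hg | hg) <;> exact hg.1
  · have hJm := mul_mem hC' (inv_mem hB')
    rw [mul_inv_cancel_right] at hJm
    rw [Subgroup.closure_le]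
    rintro g (rfl | rfl)
    · exact hA'
    · exact hJm
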